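/- For all real numbers x, y with x ≥ 0, y ≥ 0 and x + y < 1/2, one has H_b(x, y) ≤ x + y. -/

import Mathlib

/-- The stability function `H_b` of the bubble case. -/
noncomputable def Hb (x y : ℝ) : ℝ :=
  (4 / (4 - x * y)) * max (x * (2 + y) / (2 - y)) (y * (2 + x) / (2 - x))

/-!
`H_b` is the larger of two functions exchanged by the symmetry `x ↔ y`. Subtracting the first one
from `s = x + y` leaves a quotient with numerator
`y * (2 * (8 - (s + 2) ^ 2) + y * (4 + s * (2 + x)))`, so the bound holds as long as
`(s + 2) ^ 2 ≤ 8`, that is `s ≤ 2 * √2 - 2`. This threshold exceeds `1 / 2`, and letting `y → 0`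
shows that it is the best possible one.
-/

section Branch

variable {K : Type*} [Field K]

/-- The product of the prefactor of `Hb x y` with the first argument of its maximum. The second
argument gives `bubbleBranch y x`, so that bounds on `Hb` need only be proved for one branch. -/
def bubbleBranch (x y : K) : K :=
  4 / (4 - x * y) * (x * (2 + y) / (2 - y))

theorem add_sub_bubbleBranch {x y : K} (hxy : 4 - x * y ≠ 0) (hy : 2 - y ≠ 0) :
    x + y - bubbleBranch x y =
      y * (2 * (8 - (x + y + 2) ^ 2) + y * (4 + (x + y) * (2 + x))) /
        ((4 - x * y) * (2 - y)) := by
  unfold bubbleBranch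
  field_simp
  ring

variable [LinearOrder K] [IsStrictOrderedRing K]

theorem add_lt_one_of_add_two_sq_le {x y : K} (h : (x + y + 2) ^ 2 ≤ 8) : x + y < 1 := by
  have h_sq : (x + y + 2) ^ 2 < 3 ^ 2 := h.trans_lt (by norm_num)
  linarith [lt_of_pow_lt_pow_left₀ 2 (by norm_num) h_sq]

theorem mul_lt_one_of_add_lt_one {x y : K} (hx : 0 ≤ x) (hy : 0 ≤ y) (h : x + y < 1) :
    x * y < 1 :=
  mul_lt_one_of_nonneg_of_lt_one_left hx (by linarith) (by linarith)

theorem bubbleBranch_le_add {x y : K} (hx : 0 ≤ x) (hy : 0 ≤ y) (h : (x + y + 2) ^ 2 ≤ 8) :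
    bubbleBranch x y ≤ x + y := by
  have h_lt : x + y < 1 := add_lt_one_of_add_two_sq_le h
  have hxy : 0 < 4 - x * y := by linarith [mul_lt_one_of_add_lt_one hx hy h_lt]
  have hy' : 0 < 2 - y := by linarith
  have h_factor : 0 ≤ 2 * (8 - (x + y + 2) ^ 2) + y * (4 + (x + y) * (2 + x)) :=
    add_nonneg (mul_nonneg zero_le_two (sub_nonneg.mpr h)) (by positivity)
  rw [← sub_nonneg, add_sub_bubbleBranch hxy.ne' hy'.ne']
  exact div_nonneg (mul_nonneg hy h_factor) (mul_pos hxy hy').le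

end Branch

theorem Hb_eq_max_bubbleBranch {x y : ℝ} (hxy : x * y ≤ 4) :
    Hb x y = max (bubbleBranch x y) (bubbleBranch y x) := by
  have h_prefactor : 0 ≤ 4 / (4 - x * y) := div_nonneg (by norm_num) (sub_nonneg.mpr hxy)
  rw [Hb, mul_max_of_nonneg _ _ h_prefactor, bubbleBranch, bubbleBranch, mul_comm y x]

theorem stmt14_general (x y : ℝ) (hx : 0 ≤ x) (hy : 0 ≤ y) (hxy : x + y ≤ 2 * √2 - 2) :
    Hb x y ≤ x + y := by
  have h_sq : (x + y + 2) ^ 2 ≤ 8 := calc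
    (x + y + 2) ^ 2 ≤ (2 * √2) ^ 2 := by gcongr; linarith
    _ = 8 := by rw [mul_pow, Real.sq_sqrt zero_le_two]; norm_num
  have h_lt : x + y < 1 := add_lt_one_of_add_two_sq_le h_sq
  have h_mul : x * y ≤ 4 := by linarith [mul_lt_one_of_add_lt_one hx hy h_lt]
  rw [Hb_eq_max_bubbleBranch h_mul]
  refine max_le (bubbleBranch_le_add hx hy h_sq) ?_
  rw [add_comm x y] at h_sq ⊢
  exact bubbleBranch_le_add hy hx h_sq

/-- `H_b(x,y) ≤ x + y` for `x, y ≥ 0` with `x + y < 1/2`. -/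
theorem stmt14 (x y : ℝ) (hx : 0 ≤ x) (hy : 0 ≤ y) (hxy : x + y < 1 / 2) :
    Hb x y ≤ x + y := by
  have h_sqrt : 5 / 4 ≤ √2 := Real.le_sqrt_of_sq_le (by norm_num)
  exact stmt14_general x y hx hy (by linarith)
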